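/- Temporal weak BV estimate: in the discrete upwind setting with N time steps, let q ∈ (1,∞), κ > 1, δ > 0, set T := Nδ, λⁿ := δ · max_K ((div uⁿ)_K)⁻ and Λ := exp(Σ_n λⁿ), and assume ((q−1)/q) λⁿ ≤ (κ−1)/κ for every n. Let ρ⁰, f⁰,…,f^{N−1} ∈ ℝ^𝒯 be arbitrary (not necessarily nonnegative) and let ρⁿ⁺¹ solve one step of the implicit upwind scheme with data ρⁿ, fⁿ, fluxes uⁿ and time step δ for each n. Then there exists a constant C, depending only on q, κ, Λ, Σ_K |K|, ‖ρ⁰‖_{ℓ^q} and Σ_n δ‖fⁿ‖_{ℓ^q}, such that Σ_{n=0}^{N−1} Σ_{K∈𝒯} |K| |ρⁿ⁺¹_K − ρⁿ_K| ≤ C √(T/δ). -/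

import Mathlib

open Finset

theorem psi_mono (r M x y : ℝ) (hr : 1 < r) (hr2 : r ≤ 2) (hM : 1 ≤ M) (hx : 0 ≤ x) (hxy : x ≤ y)
    (hy : y ≤ M) : (r-1)/M * (y - x) ≤ |y|^(r-2)*y - |x|^(r-2)*x := by
  have hy0 : 0 ≤ y := hx.trans hxy
  rcases hy0.eq_or_lt with h | hy0'
  · have : x = 0 := by linarith
    subst this; subst h; simp
  have key : ∀ z : ℝ, 0 ≤ z → |z|^(r-2)*z = z^(r-1) := by
    intro z hz
    rw [abs_of_nonneg hz]
    rcases hz.eq_or_lt with h | h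
    · subst h; rw [Real.zero_rpow (by linarith : r-1 ≠ 0)]; simp
    · rw [show r-1 = (r-2)+1 by ring, Real.rpow_add_one h.ne']
  rw [key y hy0, key x hx]
  have h1 : (x/y)^(r-1) ≤ 1 + (r-1)*(x/y - 1) := by
    have := rpow_one_add_le_one_add_mul_self (s := x/y - 1) (p := r-1)
      (by have := div_nonneg hx hy0; linarith) (by linarith) (by linarith)
    simpa using this
  rw [Real.div_rpow hx hy0] at h1
  have hyp : 0 < y^(r-1) := Real.rpow_pos_of_pos hy0' _
  rw [div_le_iff₀ hyp] at h1
  have h2 : y^(r-1) = y^(r-2) * y := by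
    rw [show r-1 = (r-2)+1 by ring, Real.rpow_add_one hy0'.ne']
  have h3 : M⁻¹ ≤ y^(r-2) := by
    calc M⁻¹ = M^(-1:ℝ) := by rw [Real.rpow_neg_one]
      _ ≤ M^(r-2) := Real.rpow_le_rpow_of_exponent_le hM (by linarith)
      _ ≤ y^(r-2) := Real.rpow_le_rpow_of_nonpos hy0' hy (by linarith)
  have h4 : (1 + (r-1)*(x/y - 1)) * y^(r-1) = y^(r-1) - (r-1)*(y-x)*y^(r-2) := by
    rw [h2]; field_simp; ring
  have h5 : (r-1)*(y-x)*M⁻¹ ≤ (r-1)*(y-x)*y^(r-2) :=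
    mul_le_mul_of_nonneg_left h3 (mul_nonneg (by linarith) (by linarith))
  have : (r-1)/M*(y-x) = (r-1)*(y-x)*M⁻¹ := by ring
  linarith

theorem psi_mono' (r M x y : ℝ) (hr : 1 < r) (hr2 : r ≤ 2) (hM : 1 ≤ M) (hx : -M ≤ x) (hxy : x ≤ y)
    (hy : y ≤ M) : (r-1)/M * (y - x) ≤ |y|^(r-2)*y - |x|^(r-2)*x := by
  rcases le_total 0 x with h | h
  · exact psi_mono r M x y hr hr2 hM h hxy hy
  rcases le_total 0 y with h' | h'
  · have h1 := psi_mono r M 0 y hr hr2 hM le_rfl h' hy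
    have h2 := psi_mono r M 0 (-x) hr hr2 hM le_rfl (by linarith) (by linarith)
    simp only [abs_neg, mul_zero, sub_zero] at h1 h2
    nlinarith
  · have h2 := psi_mono r M (-y) (-x) hr hr2 hM (by linarith) (by linarith) (by linarith)
    simp only [abs_neg] at h2
    nlinarith

theorem bregman (r a b : ℝ) (hr : 1 < r) (hr2 : r ≤ 2) :
    r*(r-1)/2 * ((a-b)^2/(1+|a|+|b|)) ≤ |a|^r - |b|^r - r*(|b|^(r-2)*b)*(a-b) := by
  set M := 1+|a|+|b| with hMd
  have hM : 1 ≤ M := by have := abs_nonneg a; have := abs_nonneg b; linarith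
  set k := r*(r-1)/2/M with hk
  let h : ℝ → ℝ := fun x => |x|^r - k*x^2
  have hd : ∀ x, HasDerivAt h (r*|x|^(r-2)*x - k*(2*x)) x := by
    intro x
    have h1 := hasDerivAt_abs_rpow x hr
    have h2 := ((hasDerivAt_pow 2 x).const_mul k)
    have := h1.sub h2
    refine HasDerivAt.congr_deriv this ?_
    simp
  have hdd : deriv h = fun x => r*|x|^(r-2)*x - k*(2*x) := funext fun x => (hd x).deriv
  have hc : ConvexOn ℝ (Set.Icc (-M) M) h := by
    apply MonotoneOn.convexOn_of_deriv (convex_Icc _ _)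
    · exact fun x _ => (hd x).continuousAt.continuousWithinAt
    · exact fun x _ => (hd x).differentiableAt.differentiableWithinAt
    · intro x hx y hy hxy
      have hx' := interior_subset hx
      have hy' := interior_subset hy
      have := psi_mono' r M x y hr hr2 hM hx'.1 hxy hy'.2
      rw [hdd]
      have h3 := mul_le_mul_of_nonneg_left this (by linarith : 0 ≤ r)
      have : r*((r-1)/M*(y-x)) = k*2*(y-x) := by rw [hk]; ring
      simp only
      nlinarith
  have ha : a ∈ Set.Icc (-M) M := by
    rw [Set.mem_Icc, ← abs_le]; have := abs_nonneg b; linarith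
  have hb : b ∈ Set.Icc (-M) M := by
    rw [Set.mem_Icc, ← abs_le]; have := abs_nonneg a; linarith
  have ht : h b + (r*|b|^(r-2)*b - k*(2*b))*(a-b) ≤ h a := by
    rcases lt_trichotomy a b with hab | hab | hab
    · have := hc.slope_le_of_hasDerivAt ha hb hab (hd b)
      rw [slope_def_field, div_le_iff₀ (by linarith)] at this
      linarith
    · subst hab; simp
    · have := hc.le_slope_of_hasDerivAt hb ha hab (hd b)
      rw [slope_def_field, le_div_iff₀ (by linarith)] at this
      linarith
  have e : r*(r-1)/2 * ((a-b)^2/M) = k*(a-b)^2 := by rw [hk]; ring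
  rw [e]
  simp only [h] at ht
  nlinarith

theorem holder {ι : Type} [Fintype ι] (vol : ι → ℝ) (hv : ∀ K, 0 < vol K) (r : ℝ) (hr : 1 < r)
    (v b : ι → ℝ) : |∑ K, vol K * (v K * (|b K|^(r-2)*b K))| ≤
      (∑ K, vol K * |v K|^r)^(1/r) * ((∑ K, vol K * |b K|^r)^(1/r))^(r-1) := by
  have hr0 : 0 < r := by linarith
  have hr1 : 0 < r - 1 := by linarith
  have hpq : r.HolderConjugate (Real.conjExponent r) := Real.HolderConjugate.conjExponent hr
  have hs : Real.conjExponent r = r/(r-1) := rfl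
  rw [hs] at hpq
  have hB : 0 ≤ ∑ K, vol K * |b K|^r :=
    Finset.sum_nonneg fun K _ => mul_nonneg (hv K).le (by positivity)
  have H := Real.inner_le_Lp_mul_Lq_of_nonneg (univ : Finset ι)
    (f := fun K => (vol K)^(1/r) * |v K|) (g := fun K => (vol K)^((r-1)/r) * |b K|^(r-1)) hpq
    (fun K _ => by have := hv K; positivity) (fun K _ => by have := hv K; positivity)
  have e1 : ∀ K, ((vol K)^(1/r) * |v K|)^r = vol K * |v K|^r := by
    intro K
    rw [Real.mul_rpow (Real.rpow_nonneg (hv K).le _) (abs_nonneg _), ← Real.rpow_mul (hv K).le]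
    rw [one_div_mul_cancel hr0.ne', Real.rpow_one]
  have e2 : ∀ K, ((vol K)^((r-1)/r) * |b K|^(r-1))^(r/(r-1)) = vol K * |b K|^r := by
    intro K
    rw [Real.mul_rpow (Real.rpow_nonneg (hv K).le _) (by positivity), ← Real.rpow_mul (hv K).le,
      ← Real.rpow_mul (abs_nonneg _)]
    rw [show (r-1)/r*(r/(r-1)) = 1 by field_simp, show (r-1)*(r/(r-1)) = r by field_simp,
      Real.rpow_one]
  have e3 : ∀ K, (vol K)^(1/r) * |v K| * ((vol K)^((r-1)/r) * |b K|^(r-1))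
      = |vol K * (v K * (|b K|^(r-2)*b K))| := by
    intro K
    have h1 : (vol K)^(1/r) * (vol K)^((r-1)/r) = vol K := by
      rw [← Real.rpow_add (hv K), show 1/r+(r-1)/r = 1 by field_simp; ring, Real.rpow_one]
    have h2 : |b K|^(r-1) = |b K|^(r-2) * |b K| := by
      by_cases h : b K = 0
      · simp [h, Real.zero_rpow hr1.ne']
      · rw [← Real.rpow_add_one (abs_pos.2 h).ne']; ring_nf
    rw [abs_mul, abs_mul, abs_mul, abs_of_pos (hv K), h2, 
      abs_of_nonneg (Real.rpow_nonneg (abs_nonneg (b K)) (r-2))]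
    calc _ = ((vol K)^(1/r) * (vol K)^((r-1)/r)) * (|v K| * (|b K|^(r-2) * |b K|)) := by ring
      _ = _ := by rw [h1]
  simp only [e1, e2, e3] at H
  refine (Finset.abs_sum_le_sum_abs _ _).trans (H.trans (le_of_eq ?_))
  rw [← Real.rpow_mul hB]
  congr 2
  field_simp

theorem nrm_comp {ι : Type} [Fintype ι] (vol : ι → ℝ) (hv : ∀ K, 0 < vol K) (r q : ℝ) (hr : 1 < r)
    (hrq : r ≤ q) (v : ι → ℝ) : (∑ K, vol K * |v K|^r)^(1/r) ≤
      (∑ K, vol K)^((1-(q/r)⁻¹)/r) * (∑ K, vol K * |v K|^q)^(1/q) := by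
  have hr0 : 0 < r := by linarith
  have hq0 : 0 < q := by linarith
  have H := Real.inner_le_weight_mul_Lp_of_nonneg (univ : Finset ι) (p := q/r)
    (by rw [le_div_iff₀ hr0]; linarith) vol (fun K => |v K|^r) (fun K => (hv K).le)
    (fun K => by positivity)
  have hV : 0 ≤ ∑ K, vol K := Finset.sum_nonneg fun K _ => (hv K).le
  have hB : 0 ≤ ∑ K, vol K * |v K|^q :=
    Finset.sum_nonneg fun K _ => mul_nonneg (hv K).le (by positivity)
  have hA : 0 ≤ ∑ K, vol K * |v K|^r :=
    Finset.sum_nonneg fun K _ => mul_nonneg (hv K).le (by positivity)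
  have e : ∀ K, (|v K|^r)^(q/r) = |v K|^q := by
    intro K
    rw [← Real.rpow_mul (abs_nonneg _)]; congr 1; field_simp
  simp only [e] at H
  have := Real.rpow_le_rpow hA H (by positivity : 0 ≤ 1/r)
  refine this.trans (le_of_eq ?_)
  rw [Real.mul_rpow (by positivity) (by positivity), ← Real.rpow_mul hV, ← Real.rpow_mul hB]
  congr 2
  · ring
  · field_simp

theorem transport {ι : Type} [Fintype ι] [DecidableEq ι] (edge u : ι → ι → ℝ)
    (hes : ∀ K L, edge K L = edge L K) (hen : ∀ K L, 0 ≤ edge K L) (hu : ∀ K L, u K L = - u L K)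
    (r : ℝ) (hr : 1 < r) (hr2 : r ≤ 2) (b : ι → ℝ) :
    (r-1) * ∑ K, (∑ L ∈ univ.erase K, edge K L * u K L) * |b K|^r ≤
      r * ∑ K, (|b K|^(r-2)*b K) * ∑ L ∈ univ.erase K, edge K L *
              (max (u K L) 0 * b K - max (-u K L) 0 * b L) := by
  have hu0 : ∀ K, u K K = 0 := fun K => by have := hu K K; linarith
  have E1 : ∀ K, ∑ L ∈ univ.erase K, edge K L * u K L = ∑ L, edge K L * u K L := fun K =>
    Finset.sum_erase _ (by simp [hu0])
  have E2 : ∀ K, ∑ L ∈ univ.erase K, edge K L *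
              (max (u K L) 0 * b K - max (-u K L) 0 * b L) = ∑ L, edge K L *
              (max (u K L) 0 * b K - max (-u K L) 0 * b L) := fun K =>
    Finset.sum_erase _ (by simp [hu0])
  simp only [E1, E2]
  have hp : ∀ K L, max (u K L) 0 = u K L + max (-u K L) 0 := by
    intro K L
    rcases le_total 0 (u K L) with h | h
    · rw [max_eq_left h, max_eq_right (by linarith)]; ring
    · rw [max_eq_right h, max_eq_left (by linarith)]; ring
  have hφ : ∀ K, |b K|^(r-2)*b K * b K = |b K|^r := by
    intro K
    by_cases h : b K = 0
    · simp [h, Real.zero_rpow (by linarith : r ≠ 0)]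
    · rw [mul_assoc, ← abs_mul_abs_self, ← mul_assoc, ← Real.rpow_add_one (abs_pos.2 h).ne',
        ← Real.rpow_add_one (abs_pos.2 h).ne']
      ring_nf
  have hB : ∀ K L, |b K|^r - |b L|^r ≤ r * (|b K|^(r-2)*b K) * (b K - b L) := by
    intro K L
    have := bregman r (b L) (b K) hr hr2
    have h2 : 0 ≤ r*(r-1)/2 * ((b L-b K)^2/(1+|b L|+|b K|)) := by
      have : 0 < r - 1 := by linarith
      have : 0 < r := by linarith
      positivity
    linarith
  have swap : ∑ K, ∑ L, edge K L * max (-u K L) 0 * |b L|^r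
      = ∑ K, ∑ L, edge K L * max (u K L) 0 * |b K|^r := by
    rw [Finset.sum_comm]
    refine Finset.sum_congr rfl fun K _ => Finset.sum_congr rfl fun L _ => ?_
    rw [hes L K, hu L K, neg_neg]
  have main : ∑ K, ∑ L, (r * (edge K L * u K L * |b K|^r) +
        edge K L * max (-u K L) 0 * (|b K|^r - |b L|^r)) ≤
      r * ∑ K, (|b K|^(r-2)*b K) * ∑ L, edge K L *
              (max (u K L) 0 * b K - max (-u K L) 0 * b L) := by
    rw [Finset.mul_sum]
    refine Finset.sum_le_sum fun K _ => ?_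
    rw [Finset.mul_sum, Finset.mul_sum]
    refine Finset.sum_le_sum fun L _ => ?_
    have h1 := mul_le_mul_of_nonneg_left (hB K L)
      (mul_nonneg (hen K L) (le_max_right (-u K L) 0))
    rw [← hφ K] at h1
    rw [hp K L, ← hφ K]
    linarith
  refine le_trans (le_of_eq ?_) main
  have : ∀ K L, r * (edge K L * u K L * |b K|^r) +
        edge K L * max (-u K L) 0 * (|b K|^r - |b L|^r) =
      ((r-1) * (edge K L * u K L * |b K|^r) + edge K L * max (u K L) 0 * |b K|^r)
        - edge K L * max (-u K L) 0 * |b L|^r := by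
    intro K L; rw [hp K L]; ring
  simp only [this, Finset.sum_sub_distrib, Finset.sum_add_distrib, swap, Finset.mul_sum,
    Finset.sum_mul]
  ring

theorem psi_mul (r : ℝ) (hr : 1 < r) (x : ℝ) : x * (|x|^(r-2)*x) = |x|^r := by
  by_cases h : x = 0
  · simp [h, Real.zero_rpow (by linarith : r ≠ 0)]
  · rw [show x * (|x|^(r-2)*x) = |x|^(r-2)*(x*x) by ring, ← abs_mul_abs_self, ← mul_assoc,
      ← Real.rpow_add_one (abs_pos.2 h).ne', ← Real.rpow_add_one (abs_pos.2 h).ne']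
    ring_nf

theorem energy_step {ι : Type} [Fintype ι] [DecidableEq ι] (vol : ι → ℝ) (hv : ∀ K, 0 < vol K)
    (edge u : ι → ι → ℝ)
    (hes : ∀ K L, edge K L = edge L K) (hen : ∀ K L, 0 ≤ edge K L) (hu : ∀ K L, u K L = - u L K)
    (r : ℝ) (hr : 1 < r) (hr2 : r ≤ 2) (δ : ℝ) (hδ : 0 < δ) (a b f : ι → ℝ) (lam : ℝ)
    (heq : ∀ K, (b K - a K) / δ +
            ∑ L ∈ univ.erase K, edge K L / vol K *
              (max (u K L) 0 * b K - max (-u K L) 0 * b L) = f K)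
    (hlam : ∀ K, δ * (-((∑ L ∈ univ.erase K, edge K L * u K L) / vol K)) ≤ lam) :
    r * ∑ K, vol K * ((b K - a K) * (|b K|^(r-2)*b K)) ≤
      (r-1) * lam * (∑ K, vol K * |b K|^r) + r * (δ * ∑ K, vol K * (f K * (|b K|^(r-2)*b K))) := by
  have h1 : ∀ K, vol K * ((b K - a K) * (|b K|^(r-2)*b K)) =
      δ * (vol K * (f K * (|b K|^(r-2)*b K))) - δ * ((|b K|^(r-2)*b K) *
        ∑ L ∈ univ.erase K, edge K L * (max (u K L) 0 * b K - max (-u K L) 0 * b L)) := by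
    intro K
    have hK := (hv K).ne'
    have e : ∑ L ∈ univ.erase K, edge K L / vol K *
              (max (u K L) 0 * b K - max (-u K L) 0 * b L) =
        (∑ L ∈ univ.erase K, edge K L * (max (u K L) 0 * b K - max (-u K L) 0 * b L)) / vol K := by
      rw [Finset.sum_div]
      exact Finset.sum_congr rfl fun L _ => by ring
    rw [← heq K, e]
    field_simp
    ring
  have h2 := transport edge u hes hen hu r hr hr2 b
  have h3 : - ∑ K, δ * ((∑ L ∈ univ.erase K, edge K L * u K L) * |b K|^r) ≤
      lam * ∑ K, vol K * |b K|^r := by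
    rw [Finset.mul_sum, ← Finset.sum_neg_distrib]
    refine Finset.sum_le_sum fun K _ => ?_
    have := mul_le_mul_of_nonneg_right (hlam K)
      (mul_nonneg (hv K).le (Real.rpow_nonneg (abs_nonneg (b K)) r))
    refine le_trans (le_of_eq ?_) this
    have hK := (hv K).ne'
    field_simp
  rw [← Finset.mul_sum] at h3
  simp only [h1, Finset.sum_sub_distrib, ← Finset.mul_sum]
  have h4 := mul_le_mul_of_nonneg_left h2 hδ.le
  have h5 := mul_le_mul_of_nonneg_left h3 (by linarith : 0 ≤ r - 1)
  linarith

theorem inv_one_sub_le (κ t : ℝ) (hκ : 1 < κ) (ht0 : 0 ≤ t) (ht : t ≤ (κ-1)/κ) :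
    1 ≤ Real.exp (κ * t) * (1 - t) := by
  have hk : 0 < κ := by linarith
  rw [le_div_iff₀ hk] at ht
  have h1 := Real.add_one_le_exp (κ * t)
  have h2 : 0 ≤ 1 - t := by nlinarith
  have h3 := mul_le_mul_of_nonneg_right h1 h2
  nlinarith [mul_nonneg ht0 (by linarith : 0 ≤ κ - 1 - t*κ)]

theorem norm_step (κ r X A F lam : ℝ) (hκ : 1 < κ) (hr : 1 < r) (hX : 0 ≤ X) (hA : 0 ≤ A)
    (hF : 0 ≤ F) (hl : 0 ≤ lam) (hcond : (r-1)/r*lam ≤ (κ-1)/κ)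
    (h : r * (X^r - A * X^(r-1)) ≤ (r-1)*lam*X^r + r*(F*X^(r-1))) :
    X ≤ Real.exp (κ * lam) * (A + F) := by
  rcases hX.eq_or_lt with h0 | h0
  · rw [← h0]; positivity
  have hr0 : 0 < r := by linarith
  have hX1 : 0 < X^(r-1) := Real.rpow_pos_of_pos h0 _
  have e : X^r = X^(r-1)*X := by rw [← Real.rpow_add_one h0.ne']; ring_nf
  have ht0 : 0 ≤ (r-1)/r*lam := by
    have : 0 < r - 1 := by linarith
    positivity
  set t := (r-1)/r*lam with ht
  have e2 : (r-1)*lam = r*t := by rw [ht]; field_simp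
  have h1 : (1-t)*X ≤ A + F := by
    rw [e, e2] at h
    have : (r * X^(r-1)) * ((1-t)*X) ≤ (r*X^(r-1))*(A+F) := by linarith
    exact le_of_mul_le_mul_left this (by positivity)
  have h2 := inv_one_sub_le κ t hκ ht0 hcond
  have htl : t ≤ lam := by
    have : r*t ≤ r*lam := by rw [← e2]; nlinarith
    exact le_of_mul_le_mul_left this hr0
  have h3 : Real.exp (κ*t) ≤ Real.exp (κ*lam) := by
    apply Real.exp_le_exp.2; nlinarith
  calc X ≤ (Real.exp (κ * t) * (1 - t)) * X := by nlinarith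
    _ = Real.exp (κ*t) * ((1-t)*X) := by ring
    _ ≤ Real.exp (κ*t) * (A+F) := by gcongr
    _ ≤ _ := by gcongr

theorem gron (κ : ℝ) (hκ : 1 < κ) (N : ℕ) (X F lam : ℕ → ℝ) (hF : ∀ n, 0 ≤ F n)
    (hl : ∀ n, 0 ≤ lam n)
    (h : ∀ n < N, X (n+1) ≤ Real.exp (κ * lam n) * (X n + F n)) :
    ∀ n ≤ N, X n ≤ Real.exp (κ * ∑ k ∈ range n, lam k) * (X 0 + ∑ k ∈ range n, F k) := by
  intro n
  induction n with
  | zero => intro _; simp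
  | succ n ih =>
    intro hn
    have h1 := ih (by omega)
    have h2 := h n (by omega)
    have hs : 0 ≤ ∑ k ∈ range n, lam k := Finset.sum_nonneg fun k _ => hl k
    have h3 : 1 ≤ Real.exp (κ * ∑ k ∈ range n, lam k) := Real.one_le_exp (by positivity)
    have h4 : F n ≤ Real.exp (κ * ∑ k ∈ range n, lam k) * F n := by nlinarith [hF n]
    rw [Finset.sum_range_succ, Finset.sum_range_succ, mul_add κ, add_comm (κ * _), Real.exp_add]
    refine h2.trans ?_
    rw [mul_assoc]
    gcongr
    linarith

set_option maxHeartbeats 1000000 in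
theorem core (r κ : ℝ) (hr : 1 < r) (hr2 : r ≤ 2) (hκ : 1 < κ)
    (ι : Type) [Fintype ι] [DecidableEq ι]
    (vol : ι → ℝ) (hv : ∀ K, 0 < vol K) (edge : ι → ι → ℝ) (hes : ∀ K L, edge K L = edge L K)
    (hen : ∀ K L, 0 ≤ edge K L) (u : ℕ → ι → ι → ℝ) (hu : ∀ n K L, u n K L = - u n L K)
    (δ : ℝ) (hδ : 0 < δ) (N : ℕ) (ρ f : ℕ → ι → ℝ)
    (heq : ∀ n < N, ∀ K : ι,
          (ρ (n+1) K - ρ n K) / δ +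
            ∑ L ∈ univ.erase K, edge K L / vol K *
              (max (u n K L) 0 * ρ (n+1) K - max (-u n K L) 0 * ρ (n+1) L) = f n K)
    (lam : ℕ → ℝ) (hl : ∀ n, 0 ≤ lam n)
    (hlam : ∀ n K, δ * (-((∑ L ∈ univ.erase K, edge K L * u n K L) / vol K)) ≤ lam n)
    (hcond : ∀ n < N, (r - 1)/r * lam n ≤ (κ - 1)/κ) (x y M : ℝ)
    (hx : (∑ K, vol K * |ρ 0 K| ^ r) ^ (1/r) ≤ x)
    (hy : ∑ n ∈ Finset.range N, δ * (∑ K, vol K * |f n K| ^ r) ^ (1/r) ≤ y)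
    (hM : M = Real.exp (κ * ∑ n ∈ range N, lam n) * (x + y)) :
    ∑ n ∈ Finset.range N, ∑ K, vol K * |ρ (n+1) K - ρ n K| ≤
      ((M^r + (r-1) * (∑ n ∈ range N, lam n) * M^r + r * (y * M^(r-1))) / (r*(r-1)) +
        (3 * ∑ K, vol K + 2 * M^r)/2) * Real.sqrt N := by
  have hr0 : 0 < r := by linarith
  have hr1 : 0 < r - 1 := by linarith
  set Φ : (ι → ℝ) → ℝ := fun v => ∑ K, vol K * |v K|^r with hΦ
  have hΦ0 : ∀ v, 0 ≤ Φ v := fun v =>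
    Finset.sum_nonneg fun K _ => mul_nonneg (hv K).le (by positivity)
  set X : ℕ → ℝ := fun n => (Φ (ρ n))^(1/r) with hX
  set F : ℕ → ℝ := fun n => δ * (Φ (f n))^(1/r) with hF
  have hX0 : ∀ n, 0 ≤ X n := fun n => Real.rpow_nonneg (hΦ0 _) _
  have hF0 : ∀ n, 0 ≤ F n := fun n => mul_nonneg hδ.le (Real.rpow_nonneg (hΦ0 _) _)
  have hXr : ∀ n, X n ^ r = Φ (ρ n) := by
    intro n
    rw [hX]
    simp only
    rw [← Real.rpow_mul (hΦ0 _), one_div_mul_cancel hr0.ne', Real.rpow_one]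
  have hsplit : ∀ n, ∑ K, vol K * ((ρ (n+1) K - ρ n K) * (|ρ (n+1) K|^(r-2)*ρ (n+1) K)) =
      X (n+1)^r - ∑ K, vol K * (ρ n K * (|ρ (n+1) K|^(r-2)*ρ (n+1) K)) := by
    intro n
    rw [hXr, hΦ]
    simp only [← psi_mul r hr]
    rw [← Finset.sum_sub_distrib]
    exact Finset.sum_congr rfl fun K _ => by ring
  have hen1 : ∀ n < N, r * ∑ K, vol K * ((ρ (n+1) K - ρ n K) * (|ρ (n+1) K|^(r-2)*ρ (n+1) K)) ≤
      (r-1) * lam n * X (n+1)^r + r * (F n * X (n+1)^(r-1)) := by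
    intro n hn
    have h1 := energy_step vol hv edge (u n) hes hen (hu n) r hr hr2 δ hδ (ρ n) (ρ (n+1)) (f n)
      (lam n) (heq n hn) (hlam n)
    have h2 := (le_abs_self _).trans (holder vol hv r hr (f n) (ρ (n+1)))
    have h3 := mul_le_mul_of_nonneg_left (mul_le_mul_of_nonneg_left h2 hδ.le) hr0.le
    rw [hXr]
    refine h1.trans ?_
    have : r * (F n * X (n+1)^(r-1)) = r * (δ * ((Φ (f n))^(1/r) * X (n+1)^(r-1))) := by
      simp only [hF]; ring
    rw [this]
    gcongr
  have hstep : ∀ n < N, X (n+1) ≤ Real.exp (κ * lam n) * (X n + F n) := by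
    intro n hn
    refine norm_step κ r _ _ _ _ hκ hr (hX0 _) (hX0 _) (hF0 _) (hl n) (hcond n hn) ?_
    refine le_trans ?_ (hen1 n hn)
    rw [hsplit]
    have h2 := (le_abs_self _).trans (holder vol hv r hr (ρ n) (ρ (n+1)))
    gcongr
  have hg := gron κ hκ N X F lam hF0 hl hstep
  have hx0 : 0 ≤ x := (hX0 0).trans hx
  have hXM : ∀ n ≤ N, X n ≤ M := by
    intro n hn
    have hsub : range n ⊆ range N := Finset.range_subset_range.2 hn
    have h1 : ∑ k ∈ range n, lam k ≤ ∑ k ∈ range N, lam k :=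
      Finset.sum_le_sum_of_subset_of_nonneg hsub fun k _ _ => hl k
    have h2 : ∑ k ∈ range n, F k ≤ y :=
      (Finset.sum_le_sum_of_subset_of_nonneg hsub fun k _ _ => hF0 k).trans hy
    have h3 : 0 ≤ ∑ k ∈ range n, F k := Finset.sum_nonneg fun k _ => hF0 k
    refine (hg n hn).trans ?_
    rw [hM]
    have := hX0 0
    gcongr
  have hM0 : 0 ≤ M := (hX0 0).trans (hXM 0 (Nat.zero_le _))
  have hD : ∀ n < N, r*(r-1)/2 * ∑ K, vol K * ((ρ n K - ρ (n+1) K)^2 / (1+|ρ n K|+|ρ (n+1) K|)) ≤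
      (Φ (ρ n) - Φ (ρ (n+1))) + ((r-1) * lam n * M^r + r * (F n * M^(r-1))) := by
    intro n hn
    have h1 : r*(r-1)/2 * ∑ K, vol K * ((ρ n K - ρ (n+1) K)^2 / (1+|ρ n K|+|ρ (n+1) K|)) ≤
        (Φ (ρ n) - Φ (ρ (n+1))) + r * ∑ K, vol K * ((ρ (n+1) K - ρ n K) *
          (|ρ (n+1) K|^(r-2)*ρ (n+1) K)) := by
      rw [hΦ]
      simp only
      rw [Finset.mul_sum, Finset.mul_sum, ← Finset.sum_sub_distrib, ← Finset.sum_add_distrib]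
      refine Finset.sum_le_sum fun K _ => ?_
      have := mul_le_mul_of_nonneg_left (bregman r (ρ n K) (ρ (n+1) K) hr hr2) (hv K).le
      linarith
    refine h1.trans ?_
    gcongr
    refine (hen1 n hn).trans ?_
    have h2 := hXM (n+1) hn
    have h3 := hX0 (n+1)
    have h4 := hl n
    have h5 := hF0 n
    gcongr
  have hsum : r*(r-1)/2 * ∑ n ∈ range N, ∑ K, vol K * ((ρ n K - ρ (n+1) K)^2 /
      (1+|ρ n K|+|ρ (n+1) K|)) ≤
      M^r + (r-1) * (∑ n ∈ range N, lam n) * M^r + r * (y * M^(r-1)) := by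
    rw [Finset.mul_sum]
    refine (Finset.sum_le_sum fun n hn => hD n (Finset.mem_range.1 hn)).trans ?_
    rw [Finset.sum_add_distrib, Finset.sum_range_sub', Finset.sum_add_distrib]
    have h1 : Φ (ρ 0) ≤ M^r := by
      rw [← hXr]
      exact Real.rpow_le_rpow (hX0 0) (hXM 0 (Nat.zero_le _)) hr0.le
    have h2 : ∑ n ∈ range N, (r-1) * lam n * M^r = (r-1) * (∑ n ∈ range N, lam n) * M^r := by
      rw [Finset.mul_sum, Finset.sum_mul]
    have h3 : ∑ n ∈ range N, r * (F n * M^(r-1)) = r * ((∑ n ∈ range N, F n) * M^(r-1)) := by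
      rw [Finset.sum_mul, Finset.mul_sum]
    have h4 : r * ((∑ n ∈ range N, F n) * M^(r-1)) ≤ r * (y * M^(r-1)) := by
      gcongr
    rw [h2, h3]
    linarith [hΦ0 (ρ N)]
  rcases Nat.eq_zero_or_pos N with hN | hN
  · subst hN; simp
  have hs : 0 < Real.sqrt N := Real.sqrt_pos.2 (by exact_mod_cast hN)
  set s := Real.sqrt N with hsd
  have hss : s * s = N := Real.mul_self_sqrt (Nat.cast_nonneg N)
  have hab : ∀ z : ℝ, |z| ≤ 1 + |z|^r := by
    intro z
    rcases le_total |z| 1 with h | h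
    · have : 0 ≤ |z|^r := by positivity
      linarith
    · have := Real.self_le_rpow_of_one_le h hr.le
      linarith
  have hpt : ∀ a b : ℝ, |b - a| ≤ s/2 * ((a-b)^2/(1+|a|+|b|)) + (3 + |a|^r + |b|^r)/(2*s) := by
    intro a b
    have hW : 0 < 1 + |a| + |b| := by positivity
    have hW2 : 1 + |a| + |b| ≤ 3 + |a|^r + |b|^r := by linarith [hab a, hab b]
    have h1 : (1 + |a| + |b|)/(2*s) ≤ (3 + |a|^r + |b|^r)/(2*s) := by gcongr
    have h2 : |b - a| ≤ s/2 * ((a-b)^2/(1+|a|+|b|)) + (1 + |a| + |b|)/(2*s) := by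
      generalize 1 + |a| + |b| = W at *
      rw [abs_sub_comm, ← sq_abs (a-b)]
      generalize |a-b| = d
      have : s/2*(d^2/W) + W/(2*s) - d = (s*d - W)^2/(2*s*W) := by field_simp; ring
      have h3 : 0 ≤ (s*d - W)^2/(2*s*W) := by positivity
      linarith
    linarith
  have hn1 : ∀ n ∈ range N, ∑ K, vol K * |ρ (n+1) K - ρ n K| ≤
      s/2 * (∑ K, vol K * ((ρ n K - ρ (n+1) K)^2 / (1+|ρ n K|+|ρ (n+1) K|))) +
        (3 * ∑ K, vol K + 2 * M^r)/(2*s) := by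
    intro n hn
    have hn' := Finset.mem_range.1 hn
    have h1 : Φ (ρ n) ≤ M^r := by
      rw [← hXr]; exact Real.rpow_le_rpow (hX0 _) (hXM _ hn'.le) hr0.le
    have h2 : Φ (ρ (n+1)) ≤ M^r := by
      rw [← hXr]; exact Real.rpow_le_rpow (hX0 _) (hXM _ hn') hr0.le
    have h3 : ∑ K, vol K * |ρ (n+1) K - ρ n K| ≤
      s/2 * (∑ K, vol K * ((ρ n K - ρ (n+1) K)^2 / (1+|ρ n K|+|ρ (n+1) K|))) +
        (3 * ∑ K, vol K + Φ (ρ n) + Φ (ρ (n+1)))/(2*s) := by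
      rw [hΦ]
      simp only
      rw [Finset.mul_sum, Finset.mul_sum, ← Finset.sum_add_distrib, ← Finset.sum_add_distrib,
        Finset.sum_div, ← Finset.sum_add_distrib]
      refine Finset.sum_le_sum fun K _ => ?_
      refine (mul_le_mul_of_nonneg_left (hpt (ρ n K) (ρ (n+1) K)) (hv K).le).trans (le_of_eq ?_)
      ring
    refine h3.trans (add_le_add le_rfl ?_)
    exact div_le_div_of_nonneg_right (by linarith only [h1, h2]) (by linarith only [hs])
  refine (Finset.sum_le_sum hn1).trans ?_
  rw [Finset.sum_add_distrib, ← Finset.mul_sum, Finset.sum_const, Finset.card_range, nsmul_eq_mul,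
    ← hss]
  set S := ∑ n ∈ range N, ∑ K, vol K * ((ρ n K - ρ (n+1) K)^2 / (1+|ρ n K|+|ρ (n+1) K|)) with hS
  set A := M^r + (r-1) * (∑ n ∈ range N, lam n) * M^r + r * (y * M^(r-1)) with hA
  have h1 : S/2 ≤ A/(r*(r-1)) := by
    rw [le_div_iff₀ (by positivity)]; linarith
  have h2 : s * s * ((3 * ∑ K, vol K + 2 * M^r)/(2*s)) = (3 * ∑ K, vol K + 2 * M^r)/2 * s := by
    field_simp
  rw [h2]
  nlinarith



/-- **Temporal weak BV estimate for the implicit upwind scheme.**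
For `q ∈ (1,∞)` and `κ > 1` there is a constant `C` — a function of `Λ`, `∑_K |K|`,
`‖ρ⁰‖_{ℓ^q}` and `∑ₙ δ‖fⁿ‖_{ℓ^q}` only — such that, in any discrete upwind setting
with `N` time steps, time step `δ > 0`, `λⁿ := δ · max_K ((div uⁿ)_K)⁻`,
`((q−1)/q) λⁿ ≤ (κ−1)/κ` for all `n < N`, and arbitrary data `ρ⁰, f⁰, …, f^{N−1}`,
one has `∑ₙ ∑_K |K| |ρⁿ⁺¹_K − ρⁿ_K| ≤ C · √(T/δ)` with `T := N δ`. -/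
theorem upwind_temporal_weak_BV (q κ : ℝ) (hq : 1 < q) (hκ : 1 < κ) :
    ∃ C : ℝ → ℝ → ℝ → ℝ → ℝ,
      ∀ (ι : Type) [Fintype ι] [Nonempty ι] [DecidableEq ι]
        (vol : ι → ℝ), (∀ K, 0 < vol K) →
      ∀ (edge : ι → ι → ℝ), (∀ K L, edge K L = edge L K) → (∀ K L, 0 ≤ edge K L) →
      ∀ (u : ℕ → ι → ι → ℝ), (∀ n K L, u n K L = - u n L K) →
        (∀ n K L, edge K L = 0 → u n K L = 0) →
      ∀ (δ : ℝ), 0 < δ →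
      ∀ (N : ℕ) (ρ f : ℕ → ι → ℝ),
        (∀ n < N, ∀ K : ι,
          (ρ (n+1) K - ρ n K) / δ +
            ∑ L ∈ univ.erase K, edge K L / vol K *
              (max (u n K L) 0 * ρ (n+1) K - max (-u n K L) 0 * ρ (n+1) L) = f n K) →
      ∀ (lam : ℕ → ℝ),
        (∀ n, lam n = δ * univ.sup' univ_nonempty
          (fun K => max (-((∑ L ∈ univ.erase K, edge K L * u n K L) / vol K)) 0)) →
        (∀ n < N, (q - 1)/q * lam n ≤ (κ - 1)/κ) →
      ∑ n ∈ Finset.range N, ∑ K, vol K * |ρ (n+1) K - ρ n K| ≤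
        C (Real.exp (∑ n ∈ Finset.range N, lam n)) (∑ K, vol K)
            ((∑ K, vol K * |ρ 0 K| ^ q) ^ (1/q))
            (∑ n ∈ Finset.range N, δ * (∑ K, vol K * |f n K| ^ q) ^ (1/q)) *
          Real.sqrt ((N * δ) / δ) := by
  obtain ⟨r, hr, hr2, hrq⟩ : ∃ r : ℝ, 1 < r ∧ r ≤ 2 ∧ r ≤ q :=
    ⟨min q 2, lt_min hq (by norm_num), min_le_right _ _, min_le_left _ _⟩
  have hr0 : 0 < r := by linarith
  have hq0 : 0 < q := by linarith
  refine ⟨fun Λ V x y =>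
    (((Λ^κ * (V^((1-(q/r)⁻¹)/r) * x + V^((1-(q/r)⁻¹)/r) * y))^r +
      (r-1) * Real.log Λ * (Λ^κ * (V^((1-(q/r)⁻¹)/r) * x + V^((1-(q/r)⁻¹)/r) * y))^r +
      r * ((V^((1-(q/r)⁻¹)/r) * y) *
        (Λ^κ * (V^((1-(q/r)⁻¹)/r) * x + V^((1-(q/r)⁻¹)/r) * y))^(r-1))) / (r*(r-1)) +
        (3 * V + 2 * (Λ^κ * (V^((1-(q/r)⁻¹)/r) * x + V^((1-(q/r)⁻¹)/r) * y))^r)/2), ?_⟩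
  intro ι _ _ _ vol hv edge hes hen u hu hu0 δ hδ N ρ f heq lam hlam hcond
  have hmax : ∀ n K, δ * max (-((∑ L ∈ univ.erase K, edge K L * u n K L) / vol K)) 0 ≤ lam n := by
    intro n K
    rw [hlam n]
    exact mul_le_mul_of_nonneg_left (Finset.le_sup'
      (fun K => max (-((∑ L ∈ univ.erase K, edge K L * u n K L) / vol K)) 0)
      (Finset.mem_univ K)) hδ.le
  have hl : ∀ n, 0 ≤ lam n := fun n =>
    le_trans (mul_nonneg hδ.le (le_max_right _ _)) (hmax n (Classical.arbitrary ι))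
  have hl2 : ∀ n K, δ * (-((∑ L ∈ univ.erase K, edge K L * u n K L) / vol K)) ≤ lam n :=
    fun n K => le_trans (mul_le_mul_of_nonneg_left (le_max_left _ _) hδ.le) (hmax n K)
  have hcond' : ∀ n < N, (r - 1)/r * lam n ≤ (κ - 1)/κ := by
    intro n hn
    refine le_trans (mul_le_mul_of_nonneg_right ?_ (hl n)) (hcond n hn)
    rw [div_le_div_iff₀ hr0 hq0]
    nlinarith
  have hfin := core r κ hr hr2 hκ ι vol hv edge hes hen u hu δ hδ N ρ f heq lam hl hl2 hcond'
    ((∑ K, vol K)^((1-(q/r)⁻¹)/r) * (∑ K, vol K * |ρ 0 K| ^ q) ^ (1/q))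
    ((∑ K, vol K)^((1-(q/r)⁻¹)/r) *
      ∑ n ∈ Finset.range N, δ * (∑ K, vol K * |f n K| ^ q) ^ (1/q)) _
    (nrm_comp vol hv r q hr hrq (ρ 0))
    (by
      rw [Finset.mul_sum]
      refine Finset.sum_le_sum fun n _ => ?_
      have := mul_le_mul_of_nonneg_left (nrm_comp vol hv r q hr hrq (f n)) hδ.le
      linarith) rfl
  have e1 : Real.exp (κ * ∑ n ∈ range N, lam n) = Real.exp (∑ n ∈ range N, lam n) ^ κ := by
    rw [mul_comm, Real.exp_mul]
  rw [e1] at hfin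
  rw [mul_div_cancel_right₀ _ hδ.ne']
  simp only [Real.log_exp]
  exact hfin
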